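/- Let k, l, p, r : T → ℝ be continuous, with l_x and p_x (partial derivatives with respect to the first argument) also continuous on T. Then there exist constants c₁, …, c₆ > 0 such that for all continuously differentiable functions ω̂, ω̃ : [0,1] → ℝ and every x ∈ [0,1], the function G[ω̂, ω̃](x) = ℛ[𝒫[ω̃](ω̃' + 𝒫₁[ω̃])](x) + ℛ[𝒫[ω̃](ω̂' + 𝓛₁[ω̂])](x) + ℛ[𝓛[ω̂](ω̃' + 𝒫₁[ω̃])](x) − ℛ[𝓛[ω̂](ω̂' + 𝓛₁[ω̂])](x) satisfies |G[ω̂, ω̃](x)| ≤ c₁(‖ω̃‖_{L²} + |ω̃(x)|)(‖ω̃'‖_{L²} + |ω̃'(x)|) + c₂(‖ω̃‖²_{L²} + |ω̃(x)|²) + c₃(‖ω̃'‖²_{L²} + |ω̃'(x)|²) + c₄(‖ω̂‖_{L²} + |ω̂(x)|)(‖ω̂'‖_{L²} + |ω̂'(x)|) + c₅(‖ω̂‖²_{L²} + |ω̂(x)|²) + c₆(‖ω̂'‖²_{L²} + |ω̂'(x)|²). -/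

import Mathlib

open MeasureTheory

noncomputable section

/-- The closed triangle `T = {(x, y) : 0 ≤ x ≤ y ≤ 1}`. -/
def T : Set (ℝ × ℝ) := {q : ℝ × ℝ | 0 ≤ q.1 ∧ q.1 ≤ q.2 ∧ q.2 ≤ 1}

/-- Partial derivative in the first variable. -/
def pdx (f : ℝ → ℝ → ℝ) (x y : ℝ) : ℝ := deriv (fun x' => f x' y) x

/-- The `L²(0,1)` norm. -/
def L2norm (f : ℝ → ℝ) : ℝ := (∫ x in (0:ℝ)..1, f x ^ 2) ^ (1/2 : ℝ)

/-- The functional `𝒦[v](x) = v(x) - ∫_x^1 k(x,y) v(y) dy`. -/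
def opK (k : ℝ → ℝ → ℝ) (v : ℝ → ℝ) (x : ℝ) : ℝ := v x - ∫ y in x..1, k x y * v y

/-- The functional `𝓛[v](x) = v(x) + ∫_x^1 l(x,y) v(y) dy`. -/
def opL (l : ℝ → ℝ → ℝ) (v : ℝ → ℝ) (x : ℝ) : ℝ := v x + ∫ y in x..1, l x y * v y

/-- The functional `𝓛₁[v](x) = l(x,x) v(x) + ∫_x^1 l_x(x,y) v(y) dy`. -/
def opL1 (l : ℝ → ℝ → ℝ) (v : ℝ → ℝ) (x : ℝ) : ℝ :=
  l x x * v x + ∫ y in x..1, pdx l x y * v y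

/-- The functional `𝒫[v](x) = v(x) - ∫_x^1 p(x,y) v(y) dy`. -/
def opP (p : ℝ → ℝ → ℝ) (v : ℝ → ℝ) (x : ℝ) : ℝ := v x - ∫ y in x..1, p x y * v y

/-- The functional `ℛ[v](x) = v(x) + ∫_x^1 r(x,y) v(y) dy`. -/
def opR (r : ℝ → ℝ → ℝ) (v : ℝ → ℝ) (x : ℝ) : ℝ := v x + ∫ y in x..1, r x y * v y

/-- The functional `𝒫₁[v](x) = p(x,x) v(x) - ∫_x^1 p_x(x,y) v(y) dy`. -/
def opP1 (p : ℝ → ℝ → ℝ) (v : ℝ → ℝ) (x : ℝ) : ℝ :=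
  p x x * v x - ∫ y in x..1, pdx p x y * v y

/-- A kernel that is continuous on the compact triangle is bounded there. -/
lemma exists_bound_on_T {k : ℝ → ℝ → ℝ} (hk : ContinuousOn (Function.uncurry k) T) :
    ∃ C, ∀ x y, 0 ≤ x → x ≤ y → y ≤ 1 → |k x y| ≤ C := by
  have hT : IsCompact T := by
    apply (isCompact_Icc (a := ((0, 0) : ℝ × ℝ)) (b := (1, 1))).of_isClosed_subset
    · exact (isClosed_le continuous_const continuous_fst).inter
        ((isClosed_le continuous_fst continuous_snd).inter
          (isClosed_le continuous_snd continuous_const))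
    · rintro ⟨a, b⟩ ⟨h0, h1, h2⟩
      exact ⟨⟨h0, h0.trans h1⟩, ⟨h1.trans h2, h2⟩⟩
  obtain ⟨C, hC⟩ := hT.exists_bound_of_continuousOn hk
  exact ⟨C, fun x y h0 h1 h2 => hC (x, y) ⟨h0, h1, h2⟩⟩

lemma L2norm_nonneg (f : ℝ → ℝ) : 0 ≤ L2norm f :=
  Real.rpow_nonneg (intervalIntegral.integral_nonneg zero_le_one fun _ _ => sq_nonneg _) _

lemma L2norm_sq (f : ℝ → ℝ) : L2norm f ^ 2 = ∫ x in (0:ℝ)..1, f x ^ 2 := by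
  rw [L2norm, ← Real.sqrt_eq_rpow, Real.sq_sqrt]
  exact intervalIntegral.integral_nonneg zero_le_one fun _ _ => sq_nonneg _

/-- The `L¹` norm on the unit interval is at most the `L²` norm. -/
lemma integral_abs_le_L2norm {v : ℝ → ℝ} (hv : Continuous v) :
    ∫ y in (0:ℝ)..1, |v y| ≤ L2norm v := by
  set I := ∫ y in (0:ℝ)..1, |v y| with hI
  refine le_of_sq_le_sq ?_ (L2norm_nonneg v)
  rw [L2norm_sq]
  have hpos : 0 ≤ ∫ y in (0:ℝ)..1, (|v y| - I) ^ 2 :=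
    intervalIntegral.integral_nonneg zero_le_one fun _ _ => sq_nonneg _
  have hexp : ∫ y in (0:ℝ)..1, (|v y| - I) ^ 2 = (∫ y in (0:ℝ)..1, v y ^ 2) - I ^ 2 := by
    have hfun : (fun y => (|v y| - I) ^ 2) = fun y => (v y ^ 2 - 2 * I * |v y|) + I ^ 2 := by
      funext y
      rw [← sq_abs (v y)]
      ring
    rw [hfun, intervalIntegral.integral_add, intervalIntegral.integral_sub,
      intervalIntegral.integral_const_mul, ← hI, intervalIntegral.integral_const]
    · simp only [smul_eq_mul]
      ring
    all_goals exact Continuous.intervalIntegrable (by fun_prop) _ _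
  linarith

/-- A tail integral with pointwise dominated integrand is dominated by the full integral. -/
lemma abs_tail_integral_le {f g : ℝ → ℝ} {x : ℝ} (hx : x ∈ Set.Icc (0:ℝ) 1)
    (hg : Continuous g) (hg0 : ∀ y, 0 ≤ g y) (hfg : ∀ y, x ≤ y → y ≤ 1 → |f y| ≤ g y) :
    |∫ y in x..1, f y| ≤ ∫ y in (0:ℝ)..1, g y := by
  calc |∫ y in x..1, f y| ≤ ∫ y in x..1, g y := by
        rw [← Real.norm_eq_abs]
        exact intervalIntegral.norm_integral_le_of_norm_le hx.2
          (Filter.Eventually.of_forall fun y hy => hfg y hy.1.le hy.2) (hg.intervalIntegrable _ _)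
    _ ≤ ∫ y in (0:ℝ)..1, g y :=
        intervalIntegral.integral_mono_interval hx.1 hx.2 le_rfl
          (Filter.Eventually.of_forall hg0) (hg.intervalIntegrable _ _)

lemma abs_tail_kernel_integral_le {K : ℝ → ℝ → ℝ} {M : ℝ} (hM : 0 ≤ M)
    (hK : ∀ x y, 0 ≤ x → x ≤ y → y ≤ 1 → |K x y| ≤ M) {v : ℝ → ℝ} (hv : Continuous v)
    {x : ℝ} (hx : x ∈ Set.Icc (0:ℝ) 1) :
    |∫ y in x..1, K x y * v y| ≤ M * L2norm v := by
  calc |∫ y in x..1, K x y * v y| ≤ ∫ y in (0:ℝ)..1, M * |v y| := by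
        refine abs_tail_integral_le hx (by fun_prop) (fun y => by positivity) fun y h1 h2 => ?_
        rw [abs_mul]
        exact mul_le_mul_of_nonneg_right (hK x y hx.1 h1 h2) (abs_nonneg _)
    _ = M * ∫ y in (0:ℝ)..1, |v y| := intervalIntegral.integral_const_mul _ _
    _ ≤ M * L2norm v := mul_le_mul_of_nonneg_left (integral_abs_le_L2norm hv) hM

lemma abs_opL_le {l : ℝ → ℝ → ℝ} {M : ℝ} (hM : 1 ≤ M)
    (hl : ∀ x y, 0 ≤ x → x ≤ y → y ≤ 1 → |l x y| ≤ M) {v : ℝ → ℝ} (hv : Continuous v)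
    {x : ℝ} (hx : x ∈ Set.Icc (0:ℝ) 1) :
    |opL l v x| ≤ M * (|v x| + L2norm v) := by
  have h := abs_tail_kernel_integral_le (by linarith) hl hv hx
  have h' := abs_add_le (v x) (∫ y in x..1, l x y * v y)
  have h'' := mul_le_mul_of_nonneg_right hM (abs_nonneg (v x))
  rw [opL]
  linarith

lemma abs_opP_le {p : ℝ → ℝ → ℝ} {M : ℝ} (hM : 1 ≤ M)
    (hp : ∀ x y, 0 ≤ x → x ≤ y → y ≤ 1 → |p x y| ≤ M) {v : ℝ → ℝ} (hv : Continuous v)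
    {x : ℝ} (hx : x ∈ Set.Icc (0:ℝ) 1) :
    |opP p v x| ≤ M * (|v x| + L2norm v) := by
  have h := abs_tail_kernel_integral_le (by linarith) hp hv hx
  have h' := abs_sub (v x) (∫ y in x..1, p x y * v y)
  have h'' := mul_le_mul_of_nonneg_right hM (abs_nonneg (v x))
  rw [opP]
  linarith

lemma abs_deriv_add_opL1_le {l : ℝ → ℝ → ℝ} {M : ℝ} (hM : 1 ≤ M)
    (hl : ∀ x y, 0 ≤ x → x ≤ y → y ≤ 1 → |l x y| ≤ M)
    (hlx : ∀ x y, 0 ≤ x → x ≤ y → y ≤ 1 → |pdx l x y| ≤ M) {v : ℝ → ℝ} (hv : Continuous v)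
    {x : ℝ} (hx : x ∈ Set.Icc (0:ℝ) 1) :
    |deriv v x + opL1 l v x| ≤ M * (|deriv v x| + |v x| + L2norm v) := by
  have h := abs_tail_kernel_integral_le (by linarith) hlx hv hx
  have h₁ := abs_add_le (deriv v x) (l x x * v x + ∫ y in x..1, pdx l x y * v y)
  have h₂ := abs_add_le (l x x * v x) (∫ y in x..1, pdx l x y * v y)
  have h₃ := mul_le_mul_of_nonneg_right (hl x x hx.1 le_rfl hx.2) (abs_nonneg (v x))
  have h₄ := mul_le_mul_of_nonneg_right hM (abs_nonneg (deriv v x))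
  rw [← abs_mul] at h₃
  rw [opL1]
  linarith

lemma abs_deriv_add_opP1_le {p : ℝ → ℝ → ℝ} {M : ℝ} (hM : 1 ≤ M)
    (hp : ∀ x y, 0 ≤ x → x ≤ y → y ≤ 1 → |p x y| ≤ M)
    (hpx : ∀ x y, 0 ≤ x → x ≤ y → y ≤ 1 → |pdx p x y| ≤ M) {v : ℝ → ℝ} (hv : Continuous v)
    {x : ℝ} (hx : x ∈ Set.Icc (0:ℝ) 1) :
    |deriv v x + opP1 p v x| ≤ M * (|deriv v x| + |v x| + L2norm v) := by
  have h := abs_tail_kernel_integral_le (by linarith) hpx hv hx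
  have h₁ := abs_add_le (deriv v x) (p x x * v x - ∫ y in x..1, pdx p x y * v y)
  have h₂ := abs_sub (p x x * v x) (∫ y in x..1, pdx p x y * v y)
  have h₃ := mul_le_mul_of_nonneg_right (hp x x hx.1 le_rfl hx.2) (abs_nonneg (v x))
  have h₄ := mul_le_mul_of_nonneg_right hM (abs_nonneg (deriv v x))
  rw [← abs_mul] at h₃
  rw [opP1]
  linarith

/-- Young's inequality for the products occurring under `ℛ`. -/
lemma abs_mul_le_of_le_sums {A B M a n b b' m : ℝ} (hA : |A| ≤ M * (a + n))
    (hB : |B| ≤ M * (b' + b + m)) :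
    |A * B| ≤ M ^ 2 * (a ^ 2 + n ^ 2 + 3 / 2 * (b' ^ 2 + b ^ 2 + m ^ 2)) := by
  rw [abs_mul]
  have h := mul_le_mul hA hB (abs_nonneg _) ((abs_nonneg _).trans hA)
  have hY : (a + n) * (b' + b + m) ≤ a ^ 2 + n ^ 2 + 3 / 2 * (b' ^ 2 + b ^ 2 + m ^ 2) := by
    nlinarith [sq_nonneg (a + n - (b' + b + m)), sq_nonneg (a - n), sq_nonneg (b' - b),
      sq_nonneg (b' - m), sq_nonneg (b - m)]
  nlinarith [mul_le_mul_of_nonneg_left hY (sq_nonneg M)]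

/-- `ℛ` preserves bounds by a multiple of `g + ∫ g`. -/
lemma abs_opR_le {r : ℝ → ℝ → ℝ} {M : ℝ} (hM : 1 ≤ M)
    (hr : ∀ x y, 0 ≤ x → x ≤ y → y ≤ 1 → |r x y| ≤ M) {f g : ℝ → ℝ} {C : ℝ} (hC : 0 ≤ C)
    (hg : Continuous g) (hg0 : ∀ y, 0 ≤ g y)
    (hfg : ∀ y ∈ Set.Icc (0:ℝ) 1, |f y| ≤ C * (g y + ∫ z in (0:ℝ)..1, g z))
    {x : ℝ} (hx : x ∈ Set.Icc (0:ℝ) 1) :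
    |opR r f x| ≤ 3 * M * C * (g x + ∫ z in (0:ℝ)..1, g z) := by
  set N := ∫ z in (0:ℝ)..1, g z with hN
  have hN0 : 0 ≤ N := intervalIntegral.integral_nonneg zero_le_one fun y _ => hg0 y
  have htail : |∫ y in x..1, r x y * f y| ≤ M * C * (2 * N) := by
    calc |∫ y in x..1, r x y * f y| ≤ ∫ y in (0:ℝ)..1, M * C * (g y + N) := by
          refine abs_tail_integral_le hx (by fun_prop)
            (fun y => by have := hg0 y; positivity) fun y h1 h2 => ?_
          rw [abs_mul, mul_assoc]
          exact mul_le_mul (hr x y hx.1 h1 h2) (hfg y ⟨hx.1.trans h1, h2⟩) (abs_nonneg _)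
            (by linarith)
      _ = M * C * (2 * N) := by
          rw [intervalIntegral.integral_const_mul, intervalIntegral.integral_add
            (hg.intervalIntegrable _ _) (by simp), ← hN, intervalIntegral.integral_const]
          simp only [smul_eq_mul]
          ring
  have hx' := hfg x hx
  have h1 := abs_add_le (f x) (∫ y in x..1, r x y * f y)
  have h2 : C * (g x + N) ≤ M * (C * (g x + N)) :=
    le_mul_of_one_le_left (by have := hg0 x; positivity) hM
  have h3 : 0 ≤ M * C * g x := by have := hg0 x; positivity
  rw [opR]
  linarith

/-- Bound on the nonlinear functional
`G[ω̂,ω̃] = ℛ[𝒫[ω̃](ω̃' + 𝒫₁[ω̃])] + ℛ[𝒫[ω̃](ω̂' + 𝓛₁[ω̂])] + ℛ[𝓛[ω̂](ω̃' + 𝒫₁[ω̃])]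
− ℛ[𝓛[ω̂](ω̂' + 𝓛₁[ω̂])]`. -/
theorem G_functional_bound (k l p r : ℝ → ℝ → ℝ)
    (hk : ContinuousOn (Function.uncurry k) T)
    (hl : ContinuousOn (Function.uncurry l) T)
    (hp : ContinuousOn (Function.uncurry p) T)
    (hr : ContinuousOn (Function.uncurry r) T)
    (hlx : ContinuousOn (Function.uncurry (pdx l)) T)
    (hpx : ContinuousOn (Function.uncurry (pdx p)) T) :
    ∃ c₁ > (0:ℝ), ∃ c₂ > (0:ℝ), ∃ c₃ > (0:ℝ), ∃ c₄ > (0:ℝ), ∃ c₅ > (0:ℝ), ∃ c₆ > (0:ℝ),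
      ∀ wh wt : ℝ → ℝ, ContDiff ℝ 1 wh → ContDiff ℝ 1 wt → ∀ x ∈ Set.Icc (0:ℝ) 1,
        |opR r (fun x' => opP p wt x' * (deriv wt x' + opP1 p wt x')) x
          + opR r (fun x' => opP p wt x' * (deriv wh x' + opL1 l wh x')) x
          + opR r (fun x' => opL l wh x' * (deriv wt x' + opP1 p wt x')) x
          - opR r (fun x' => opL l wh x' * (deriv wh x' + opL1 l wh x')) x| ≤
          c₁ * (L2norm wt + |wt x|) * (L2norm (deriv wt) + |deriv wt x|)
          + c₂ * (L2norm wt ^ 2 + |wt x| ^ 2)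
          + c₃ * (L2norm (deriv wt) ^ 2 + |deriv wt x| ^ 2)
          + c₄ * (L2norm wh + |wh x|) * (L2norm (deriv wh) + |deriv wh x|)
          + c₅ * (L2norm wh ^ 2 + |wh x| ^ 2)
          + c₆ * (L2norm (deriv wh) ^ 2 + |deriv wh x| ^ 2) := by
  obtain ⟨Cl, hCl⟩ := exists_bound_on_T hl
  obtain ⟨Cp, hCp⟩ := exists_bound_on_T hp
  obtain ⟨Cr, hCr⟩ := exists_bound_on_T hr
  obtain ⟨Clx, hClx⟩ := exists_bound_on_T hlx
  obtain ⟨Cpx, hCpx⟩ := exists_bound_on_T hpx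
  obtain ⟨M, hM, hMl, hMp, hMr, hMlx, hMpx⟩ :
      ∃ M : ℝ, 1 ≤ M ∧ Cl ≤ M ∧ Cp ≤ M ∧ Cr ≤ M ∧ Clx ≤ M ∧ Cpx ≤ M :=
    ⟨1 ⊔ Cl ⊔ Cp ⊔ Cr ⊔ Clx ⊔ Cpx, by simp, by simp, by simp, by simp, by simp, by simp⟩
  have bl := fun x y h0 h1 h2 => (hCl x y h0 h1 h2).trans hMl
  have bp := fun x y h0 h1 h2 => (hCp x y h0 h1 h2).trans hMp
  have br := fun x y h0 h1 h2 => (hCr x y h0 h1 h2).trans hMr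
  have blx := fun x y h0 h1 h2 => (hClx x y h0 h1 h2).trans hMlx
  have bpx := fun x y h0 h1 h2 => (hCpx x y h0 h1 h2).trans hMpx
  have hc : 0 < 4 * (3 * M * (3 * M ^ 2)) := by positivity
  refine ⟨_, hc, _, hc, _, hc, _, hc, _, hc, _, hc, fun wh wt hwh hwt x hx => ?_⟩
  have ch := hwh.continuous
  have ct := hwt.continuous
  have ch' := hwh.continuous_deriv le_rfl
  have ct' := hwt.continuous_deriv le_rfl
  set g : ℝ → ℝ := fun y => wt y ^ 2 + deriv wt y ^ 2 + wh y ^ 2 + deriv wh y ^ 2 with hg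
  have hgc : Continuous g := by fun_prop
  have hg0 : ∀ y, 0 ≤ g y := fun y => by positivity
  have hgN : ∫ y in (0:ℝ)..1, g y = L2norm wt ^ 2 + L2norm (deriv wt) ^ 2 + L2norm wh ^ 2
      + L2norm (deriv wh) ^ 2 := by
    simp only [L2norm_sq, hg]
    rw [intervalIntegral.integral_add, intervalIntegral.integral_add,
      intervalIntegral.integral_add]
    all_goals exact Continuous.intervalIntegrable (by fun_prop) _ _
  have key : ∀ A B : ℝ → ℝ,
      (∀ y ∈ Set.Icc (0:ℝ) 1, |A y| ≤ M * (|wt y| + L2norm wt) ∨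
        |A y| ≤ M * (|wh y| + L2norm wh)) →
      (∀ y ∈ Set.Icc (0:ℝ) 1, |B y| ≤ M * (|deriv wt y| + |wt y| + L2norm wt) ∨
        |B y| ≤ M * (|deriv wh y| + |wh y| + L2norm wh)) →
      |opR r (fun y => A y * B y) x| ≤ 3 * M * (3 * M ^ 2) * (g x + ∫ z in (0:ℝ)..1, g z) := by
    intro A B hA hB
    refine abs_opR_le hM br (by positivity) hgc hg0 (fun y hy => ?_) hx
    have hsum : ∀ S, S ≤ 3 * (g y + ∫ z in (0:ℝ)..1, g z) → |A y * B y| ≤ M ^ 2 * S →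
        |A y * B y| ≤ 3 * M ^ 2 * (g y + ∫ z in (0:ℝ)..1, g z) := fun S hS h => by
      linarith [mul_le_mul_of_nonneg_left hS (sq_nonneg M)]
    rcases hA y hy with hA | hA <;> rcases hB y hy with hB | hB <;>
      refine hsum _ ?_ (abs_mul_le_of_le_sums hA hB) <;>
      rw [hgN] <;>
      simp only [hg, sq_abs] <;>
      nlinarith [sq_nonneg (wt y), sq_nonneg (wh y), sq_nonneg (deriv wt y),
        sq_nonneg (deriv wh y), sq_nonneg (L2norm wt), sq_nonneg (L2norm wh),
        sq_nonneg (L2norm (deriv wt)), sq_nonneg (L2norm (deriv wh))]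
  have hP := fun y hy => abs_opP_le hM bp ct (x := y) hy
  have hL := fun y hy => abs_opL_le hM bl ch (x := y) hy
  have hP1 := fun y hy => abs_deriv_add_opP1_le hM bp bpx ct (x := y) hy
  have hL1 := fun y hy => abs_deriv_add_opL1_le hM bl blx ch (x := y) hy
  have h₁ := key _ _ (fun y hy => .inl (hP y hy)) fun y hy => .inl (hP1 y hy)
  have h₂ := key _ _ (fun y hy => .inl (hP y hy)) fun y hy => .inr (hL1 y hy)
  have h₃ := key _ _ (fun y hy => .inr (hL y hy)) fun y hy => .inl (hP1 y hy)
  have h₄ := key _ _ (fun y hy => .inr (hL y hy)) fun y hy => .inr (hL1 y hy)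
  have hprod : ∀ v : ℝ → ℝ, 0 ≤ 4 * (3 * M * (3 * M ^ 2)) * (L2norm v + |v x|)
      * (L2norm (deriv v) + |deriv v x|) := fun v => by
    have := L2norm_nonneg v
    have := L2norm_nonneg (deriv v)
    positivity
  have ht := hprod wt
  have hh := hprod wh
  refine (abs_sub _ _).trans ((add_le_add_left (abs_add_three _ _ _) _).trans ?_)
  simp only [sq_abs]
  rw [hgN] at h₁ h₂ h₃ h₄
  simp only [hg] at h₁ h₂ h₃ h₄
  linarith
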